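/- Let r : C1 → C2 be an F-linear exact (triangulated) functor between F-linear triangulated categories equipped with weight structures. Assume: (1) the weight structure on C1 is bounded; (2) the heart C_{1,w=0} is semi-primary and pseudo-Abelian; (3) r is weight exact; (4) the induced functor r_{w=0} on hearts is full; (5) r_{w=0} is conservative. Then for any M ∈ C1 and any integers α ≤ β: M is without weights α, α+1, …, β if and only if r(M) is without weights α, α+1, …, β. -/

import Mathlib

open CategoryTheory CategoryTheory.Limits CategoryTheory.Pretriangulated

namespace Paper

/-- A morphism `f : X ⟶ Y` belongs to the radical of a preadditive category if,
for every `g : Y ⟶ X`, the endomorphism `𝟙 X - g ∘ f` is invertible. -/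
def InRadical {C : Type*} [Category C] [Preadditive C] {X Y : C} (f : X ⟶ Y) : Prop :=
  ∀ g : Y ⟶ X, IsIso (𝟙 X - f ≫ g)

/-- The Jacobson radical of a (possibly noncommutative) ring, as a two-sided ideal. -/
def ringRadical (R : Type*) [Ring R] : TwoSidedIdeal R :=
  TwoSidedIdeal.jacobson ⊥

/-- A ring is semi-primary if its (Jacobson) radical is nilpotent and the quotient by
the radical is a semisimple ring. -/
def IsSemiprimaryRing (R : Type*) [Ring R] : Prop :=
  IsSemisimpleRing (ringRadical R).ringCon.Quotient ∧
    ∃ n : ℕ, ∀ f : Fin n → R, (∀ i, f i ∈ ringRadical R) → (List.ofFn f).prod = 0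

/-- A class of objects of a preadditive category is semi-primary (André–Kahn) if the
endomorphism ring of each of its objects is a semi-primary ring; for an object `X`,
the radical ideal `rad(X,X)` is exactly the Jacobson radical of `End X`. -/
def SemiprimaryOn {C : Type*} [Category C] [Preadditive C] (P : Set C) : Prop :=
  ∀ X : C, X ∈ P → IsSemiprimaryRing (CategoryTheory.End X)

/-- A class of objects is pseudo-Abelian (idempotent complete) if every idempotent
endomorphism of one of its objects splits through an object of the class. -/
def PseudoAbelianOn {C : Type*} [Category C] [Preadditive C] (P : Set C) : Prop :=
  ∀ X : C, X ∈ P → ∀ e : X ⟶ X, e ≫ e = e →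
    ∃ (Y : C) (_ : Y ∈ P) (p : X ⟶ Y) (i : Y ⟶ X), p ≫ i = e ∧ i ≫ p = 𝟙 Y

variable (C : Type*) [Category C] [Preadditive C] [HasZeroObject C] [HasShift C ℤ]
  [∀ n : ℤ, (CategoryTheory.shiftFunctor C n).Additive] [Pretriangulated C]

/-- A weight structure on a pretriangulated category: classes `le = C_{w≤0}` and
`ge = C_{w≥0}`, additive (containing zero objects, closed under finite direct sums)
and closed under retracts, with `C_{w≤0} ⊆ C_{w≤1}`, `C_{w≥1} ⊆ C_{w≥0}`,
orthogonality, and existence of weight decompositions. -/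
structure WeightStructure where
  le : Set C
  ge : Set C
  le_retract : ∀ {X Y : C} (i : X ⟶ Y) (p : Y ⟶ X), i ≫ p = 𝟙 X → Y ∈ le → X ∈ le
  ge_retract : ∀ {X Y : C} (i : X ⟶ Y) (p : Y ⟶ X), i ≫ p = 𝟙 X → Y ∈ ge → X ∈ ge
  le_zero : ∀ X : C, IsZero X → X ∈ le
  ge_zero : ∀ X : C, IsZero X → X ∈ ge
  le_add : ∀ {X Y : C} (b : BinaryBicone X Y), b.IsBilimit → X ∈ le → Y ∈ le → b.pt ∈ le
  ge_add : ∀ {X Y : C} (b : BinaryBicone X Y), b.IsBilimit → X ∈ ge → Y ∈ ge → b.pt ∈ ge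
  le_shift : ∀ X : C, X ∈ le → X⟦(-1 : ℤ)⟧ ∈ le
  ge_shift : ∀ X : C, X ∈ ge → X⟦(1 : ℤ)⟧ ∈ ge
  orthogonal : ∀ {X Y : C}, X ∈ le → Y⟦(-1 : ℤ)⟧ ∈ ge → ∀ f : X ⟶ Y, f = 0
  exists_decomp : ∀ M : C, ∃ (A B : C) (f : A ⟶ M) (g : M ⟶ B) (h : B ⟶ A⟦(1 : ℤ)⟧),
    (Triangle.mk f g h ∈ distTriang C) ∧ A ∈ le ∧ B⟦(-1 : ℤ)⟧ ∈ ge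

namespace WeightStructure

variable {C} (w : WeightStructure C)

/-- `C_{w ≤ n} := C_{w ≤ 0}[n]`. -/
def leN (n : ℤ) : Set C := {X : C | X⟦-n⟧ ∈ w.le}

/-- `C_{w ≥ n} := C_{w ≥ 0}[n]`. -/
def geN (n : ℤ) : Set C := {X : C | X⟦-n⟧ ∈ w.ge}

/-- The heart `C_{w = 0} = C_{w ≤ 0} ∩ C_{w ≥ 0}`. -/
def heart : Set C := w.leN 0 ∩ w.geN 0

/-- The weight structure is bounded if every object lies in
`C_{w ≥ m} ∩ C_{w ≤ n}` for some integers `m ≤ n`. -/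
def Bounded : Prop := ∀ M : C, ∃ m n : ℤ, m ≤ n ∧ M ∈ w.geN m ∧ M ∈ w.leN n

end WeightStructure

/-- A weight filtration of `M` concentrated at `n`: an exact triangle
`M_{≤ n-1} ⟶ M ⟶ M_{≥ n} ⟶(δ) M_{≤ n-1}[1]` with the two outer terms in
`C_{w ≤ n-1}` and `C_{w ≥ n}` respectively. -/
def IsWeightFiltrationAt {C : Type*} [Category C] [Preadditive C] [HasZeroObject C]
    [HasShift C ℤ] [∀ n : ℤ, (CategoryTheory.shiftFunctor C n).Additive] [Pretriangulated C]
    (w : WeightStructure C) (n : ℤ) {A M B : C}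
    (f : A ⟶ M) (g : M ⟶ B) (δ : B ⟶ A⟦(1 : ℤ)⟧) : Prop :=
  (Triangle.mk f g δ ∈ distTriang C) ∧ A ∈ w.leN (n - 1) ∧ B ∈ w.geN n

/-- A minimal weight filtration concentrated at `n`: a weight filtration concentrated
at `n` whose connecting morphism lies in the radical. -/
def IsMinimalWeightFiltrationAt {C : Type*} [Category C] [Preadditive C] [HasZeroObject C]
    [HasShift C ℤ] [∀ n : ℤ, (CategoryTheory.shiftFunctor C n).Additive] [Pretriangulated C]
    (w : WeightStructure C) (n : ℤ) {A M B : C}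
    (f : A ⟶ M) (g : M ⟶ B) (δ : B ⟶ A⟦(1 : ℤ)⟧) : Prop :=
  IsWeightFiltrationAt w n f g δ ∧ InRadical δ

/-- `M` is without weights `α, α+1, …, β` if it admits a weight filtration avoiding
these weights. -/
def WithoutWeights {C : Type*} [Category C] [Preadditive C] [HasZeroObject C]
    [HasShift C ℤ] [∀ n : ℤ, (CategoryTheory.shiftFunctor C n).Additive] [Pretriangulated C]
    (w : WeightStructure C) (α β : ℤ) (M : C) : Prop :=
  ∃ (A B : C) (f : A ⟶ M) (g : M ⟶ B) (δ : B ⟶ A⟦(1 : ℤ)⟧),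
    (Triangle.mk f g δ ∈ distTriang C) ∧ A ∈ w.leN (α - 1) ∧ B ∈ w.geN (β + 1)

/-- A functor is weight exact if it respects both classes of the weight structures. -/
def WeightExact {C₁ : Type*} [Category C₁] [Preadditive C₁] [HasZeroObject C₁] [HasShift C₁ ℤ]
    [∀ n : ℤ, (CategoryTheory.shiftFunctor C₁ n).Additive] [Pretriangulated C₁]
    {C₂ : Type*} [Category C₂] [Preadditive C₂] [HasZeroObject C₂] [HasShift C₂ ℤ]
    [∀ n : ℤ, (CategoryTheory.shiftFunctor C₂ n).Additive] [Pretriangulated C₂]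
    (w₁ : WeightStructure C₁) (w₂ : WeightStructure C₂) (r : C₁ ⥤ C₂) : Prop :=
  (∀ X : C₁, X ∈ w₁.le → r.obj X ∈ w₂.le) ∧ (∀ X : C₁, X ∈ w₁.ge → r.obj X ∈ w₂.ge)

/-!
Shift so that `α = 0`, fix `A ⟶ M ⟶ B ⟶ A⟦1⟧` with `A` of weights `≤ -1` and `B` of weights `≥ 0`,
and suppose that `r M` has a filtration `X ⟶ r M ⟶ Y` avoiding the weights `0, …, β`. By
orthogonality `Y` is a retract of `r B`, and the complementary idempotent factors as
`r B ⟶ r (A⟦1⟧) ⟶ r B`. Since `A⟦1⟧` has weights `≤ 0` and `B` has weights `≥ 0`, the second map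
lifts along `r` and factors through the heart, where idempotents can be lifted because the kernel of
`r` on endomorphisms lies in the radical. Hence the complement of `Y` in `r B` comes from a summand
of `B` on which `M ⟶ B` vanishes; splitting it off leaves `M ⟶ B'` with `r B'` of weights `≥ β + 1`,
and `r` detects this bound.
-/

section Radical

/-- Fullness of a functor on a class of objects. -/
def FullOn {D E : Type*} [Category D] [Category E] (r : D ⥤ E) (P : Set D) : Prop :=
  ∀ X Y : D, X ∈ P → Y ∈ P → ∀ g : r.obj X ⟶ r.obj Y, ∃ f : X ⟶ Y, r.map f = g

/-- Conservativity of a functor on a class of objects. -/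
def ConservativeOn {D E : Type*} [Category D] [Category E] (r : D ⥤ E) (P : Set D) : Prop :=
  ∀ X Y : D, X ∈ P → Y ∈ P → ∀ f : X ⟶ Y, IsIso (r.map f) → IsIso f

/-- The radical of a class of objects is nil if every element of the Jacobson radical of the
endomorphism ring of one of its objects is nilpotent. -/
def NilRadicalOn {D : Type*} [Category D] [Preadditive D] (P : Set D) : Prop :=
  ∀ X : D, X ∈ P → ∀ x ∈ ringRadical (CategoryTheory.End X), IsNilpotent x

lemma IsSemiprimaryRing.isNilpotent_of_mem_ringRadical {R : Type*} [Ring R]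
    (hR : IsSemiprimaryRing R) {x : R} (hx : x ∈ ringRadical R) : IsNilpotent x := by
  obtain ⟨-, n, hn⟩ := hR
  exact ⟨n, by simpa using hn (fun _ => x) fun _ => hx⟩

lemma SemiprimaryOn.nilRadicalOn {D : Type*} [Category D] [Preadditive D] {P : Set D}
    (hP : SemiprimaryOn P) : NilRadicalOn P :=
  fun X hX _ hx => (hP X hX).isNilpotent_of_mem_ringRadical hx

lemma mem_ringRadical_of_map_eq_zero {R S : Type*} [Ring R] [Ring S] (f : R →+* S) [IsLocalHom f]
    {x : R} (hx : f x = 0) : x ∈ ringRadical R := by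
  refine TwoSidedIdeal.mem_jacobson_iff.2 fun y => ?_
  have hunit : IsUnit (y * x + 1) := IsUnit.of_map f _ (by simp [hx])
  obtain ⟨z, hz⟩ := hunit.exists_left_inv
  refine ⟨z, ?_⟩
  rw [mul_assoc, ← mul_add_one, hz, sub_self]
  exact zero_mem _

variable {D E : Type*} [Category D] [Preadditive D] [Category E] [Preadditive E]
  {r : D ⥤ E} [r.Additive] {P : Set D}

/-- The ring homomorphism between endomorphism rings induced by an additive functor. -/
def mapEndRingHom (r : D ⥤ E) [r.Additive] (X : D) :
    CategoryTheory.End X →+* CategoryTheory.End (r.obj X) :=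
  { r.mapEnd X, r.mapAddHom with }

lemma ConservativeOn.isLocalHom_mapEndRingHom (hcons : ConservativeOn r P) {X : D} (hX : X ∈ P) :
    IsLocalHom (mapEndRingHom r X) where
  map_nonunit x hx := by
    rw [isUnit_iff_isIso] at hx ⊢
    exact hcons X X hX hX x hx

lemma exists_retract_of_idempotent_map (hcons : ConservativeOn r P) (hnil : NilRadicalOn P)
    (hsplit : PseudoAbelianOn P) {X : D} (hX : X ∈ P) (x : X ⟶ X)
    (hx : r.map x ≫ r.map x = r.map x) :
    ∃ Z ∈ P, ∃ h : Retract Z X, r.map (h.r ≫ h.i) = r.map x := by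
  have := hcons.isLocalHom_mapEndRingHom hX
  obtain ⟨e, he, hex⟩ := exists_isIdempotentElem_eq_of_ker_isNilpotent (mapEndRingHom r X)
    (fun y hy => hnil X hX y (mem_ringRadical_of_map_eq_zero _ hy)) (r.map x) ⟨x, rfl⟩ hx
  obtain ⟨Z, hZ, p, i, hpi, hip⟩ := hsplit X hX e he
  exact ⟨Z, hZ, ⟨i, p, hip⟩, (congrArg r.map hpi).trans hex⟩

/-- The element `c = b ≫ a` of `End N` satisfies `c ^ 3 = c ^ 2` after applying `r`, so that
`c ^ 2` is an idempotent corresponding to `a ≫ b`. -/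
lemma exists_retract_of_idempotent_map_comp (hcons : ConservativeOn r P) (hnil : NilRadicalOn P)
    (hsplit : PseudoAbelianOn P) {B N : D} (hN : N ∈ P) (a : B ⟶ N) (b : N ⟶ B)
    (hab : r.map (a ≫ b) ≫ r.map (a ≫ b) = r.map (a ≫ b)) :
    ∃ (Z : D) (h : Retract Z B) (ρ : N ⟶ Z), h.r = a ≫ ρ ∧ r.map (h.r ≫ h.i) = r.map (a ≫ b) := by
  simp only [Functor.map_comp, Category.assoc] at hab
  obtain ⟨Z, hZ, h, hh⟩ := exists_retract_of_idempotent_map hcons hnil hsplit hN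
    (b ≫ a ≫ b ≫ a) (by simp [reassoc_of% hab])
  have hri : r.map h.i ≫ r.map h.r = 𝟙 _ := by
    rw [← Functor.map_comp, h.retract, CategoryTheory.Functor.map_id]
  simp only [Functor.map_comp] at hh
  have hθ : r.map (h.i ≫ b ≫ a ≫ h.r) = 𝟙 _ := by
    calc r.map (h.i ≫ b ≫ a ≫ h.r)
        = r.map h.i ≫ (r.map h.r ≫ r.map h.i) ≫ r.map b ≫ r.map a ≫ r.map h.r := by
          simp [reassoc_of% hri]
      _ = r.map h.i ≫ (r.map h.r ≫ r.map h.i) ≫ r.map h.r := by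
          simp only [hh, Category.assoc, reassoc_of% hab]
      _ = 𝟙 _ := by simp [hri]
  have : IsIso (h.i ≫ b ≫ a ≫ h.r) := hcons Z Z hZ hZ _ (by rw [hθ]; infer_instance)
  refine ⟨Z, ⟨h.i ≫ b, a ≫ h.r ≫ inv (h.i ≫ b ≫ a ≫ h.r), ?_⟩, h.r ≫ inv _, rfl, ?_⟩
  · simpa only [Category.assoc] using IsIso.hom_inv_id (h.i ≫ b ≫ a ≫ h.r)
  · simp only [Functor.map_comp, Functor.map_inv, Category.assoc] at hθ ⊢
    simp only [hθ, IsIso.inv_id, Category.id_comp, reassoc_of% hh, hab]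

end Radical

section Pretriangulated

variable {C}

lemma exists_complement_of_retract {Z B : C} (h : Retract Z B) :
    ∃ (B' : C) (h' : Retract B' B), h'.r ≫ h'.i = 𝟙 B - h.r ≫ h.i := by
  obtain ⟨B', p, δ, hT⟩ := distinguished_cocone_triangle h.i
  have hip : h.i ≫ p = 0 := comp_distTriang_mor_zero₁₂ _ hT
  have hi : h.i ≫ (𝟙 B - h.r ≫ h.i) = 0 := by simp [Preadditive.comp_sub]
  obtain ⟨u, hu⟩ : ∃ u : B' ⟶ B, 𝟙 B - h.r ≫ h.i = p ≫ u := Triangle.yoneda_exact₂ _ hT _ hi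
  have : Epi p := Triangle.epi₂ _ hT
    (Triangle.mor₃_eq_zero_of_mono₁ _ hT (inferInstanceAs (Mono h.i)))
  refine ⟨B', ⟨u, p, ?_⟩, hu.symm⟩
  rw [← cancel_epi p, ← Category.assoc, ← hu]
  simp [Preadditive.sub_comp, hip]

lemma exists_distTriang_of_retract {A M B B' : C} {f : A ⟶ M} {g : M ⟶ B} {δ : B ⟶ A⟦(1 : ℤ)⟧}
    (hT : Triangle.mk f g δ ∈ distTriang C) (h : Retract B' B) (hg : g ≫ h.r ≫ h.i = g) :
    ∃ (A' : C) (f' : A' ⟶ M) (δ' : B' ⟶ A'⟦(1 : ℤ)⟧),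
      Triangle.mk f' (g ≫ h.r) δ' ∈ distTriang C ∧ Nonempty (Retract A' A) := by
  obtain ⟨A', f', δ', hT'⟩ := distinguished_cocone_triangle₁ (g ≫ h.r)
  obtain ⟨a, ha₁, ha₃⟩ : ∃ a : A' ⟶ A, f' ≫ 𝟙 M = a ≫ f ∧ δ' ≫ a⟦(1 : ℤ)⟧' = h.i ≫ δ :=
    complete_distinguished_triangle_morphism₁ _ _ hT' hT (𝟙 M) h.i
      (show (g ≫ h.r) ≫ h.i = 𝟙 M ≫ g by simp [hg])
  obtain ⟨b, hb₁, hb₃⟩ : ∃ b : A ⟶ A', f ≫ 𝟙 M = b ≫ f' ∧ δ ≫ b⟦(1 : ℤ)⟧' = h.r ≫ δ' :=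
    complete_distinguished_triangle_morphism₁ _ _ hT hT' (𝟙 M) h.r
      (show g ≫ h.r = 𝟙 M ≫ g ≫ h.r by simp)
  rw [Category.comp_id] at ha₁ hb₁
  let φ : Triangle.mk f' (g ≫ h.r) δ' ⟶ Triangle.mk f' (g ≫ h.r) δ' :=
    { hom₁ := a ≫ b
      hom₂ := 𝟙 M
      hom₃ := 𝟙 B'
      comm₁ := show f' ≫ 𝟙 M = (a ≫ b) ≫ f' by rw [Category.comp_id, Category.assoc, ← hb₁, ha₁]
      comm₂ := show (g ≫ h.r) ≫ 𝟙 B' = 𝟙 M ≫ g ≫ h.r by simp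
      comm₃ := show δ' ≫ (a ≫ b)⟦(1 : ℤ)⟧' = 𝟙 B' ≫ δ' by simp [reassoc_of% ha₃, hb₃] }
  have : IsIso (a ≫ b) := isIso₁_of_isIso₂₃ φ hT' hT' (inferInstanceAs (IsIso (𝟙 M)))
    (inferInstanceAs (IsIso (𝟙 B')))
  exact ⟨A', f', δ', hT', ⟨⟨a, b ≫ inv (a ≫ b), by rw [← Category.assoc, IsIso.hom_inv_id]⟩⟩⟩

end Pretriangulated

namespace WeightStructure

variable {C} (w : WeightStructure C) {n m k : ℤ} {X Y : C}

lemma leN_of_retract (h : Retract X Y) (hY : Y ∈ w.leN n) : X ∈ w.leN n :=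
  let hs := h.map (CategoryTheory.shiftFunctor C (-n))
  w.le_retract hs.i hs.r hs.retract hY

lemma geN_of_retract (h : Retract X Y) (hY : Y ∈ w.geN n) : X ∈ w.geN n :=
  let hs := h.map (CategoryTheory.shiftFunctor C (-n))
  w.ge_retract hs.i hs.r hs.retract hY

lemma le_iff_of_iso (e : X ≅ Y) : X ∈ w.le ↔ Y ∈ w.le :=
  ⟨w.le_retract e.inv e.hom e.inv_hom_id, w.le_retract e.hom e.inv e.hom_inv_id⟩

lemma ge_iff_of_iso (e : X ≅ Y) : X ∈ w.ge ↔ Y ∈ w.ge :=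
  ⟨w.ge_retract e.inv e.hom e.inv_hom_id, w.ge_retract e.hom e.inv e.hom_inv_id⟩

lemma mem_leN_zero_iff : X ∈ w.leN 0 ↔ X ∈ w.le :=
  w.le_iff_of_iso ((shiftFunctorZero' C (-0) neg_zero).app X)

lemma shift_mem_leN_iff (hm : n + k = m) : X⟦k⟧ ∈ w.leN m ↔ X ∈ w.leN n :=
  w.le_iff_of_iso ((shiftFunctorAdd' C k (-m) (-n) (by lia)).symm.app X)

lemma shift_mem_geN_iff (hm : n + k = m) : X⟦k⟧ ∈ w.geN m ↔ X ∈ w.geN n :=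
  w.ge_iff_of_iso ((shiftFunctorAdd' C k (-m) (-n) (by lia)).symm.app X)

lemma antitone_geN : Antitone w.geN :=
  antitone_int_of_succ_le fun n X hX =>
    (w.ge_iff_of_iso ((shiftFunctorAdd' C (-(n + 1)) 1 (-n) (by lia)).app X)).2
      (w.ge_shift _ hX)

lemma eq_zero_of_leN_of_geN (hnm : n < m) (hX : X ∈ w.leN n) (hY : Y ∈ w.geN m) (f : X ⟶ Y) :
    f = 0 := by
  have hY' : Y⟦-n⟧ ∈ w.geN 1 :=
    (w.shift_mem_geN_iff (n := n + 1) (by lia)).2 (w.antitone_geN (by lia) hY)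
  exact (Functor.map_eq_zero_iff (CategoryTheory.shiftFunctor C (-n))).1 (w.orthogonal hX hY' _)

end WeightStructure

namespace WithoutWeights

variable {C} {w : WeightStructure C} {α β : ℤ} {M N : C}

lemma of_iso (h : WithoutWeights w α β M) (e : M ≅ N) : WithoutWeights w α β N := by
  obtain ⟨A, B, f, g, δ, hT, hA, hB⟩ := h
  refine ⟨A, B, f ≫ e.hom, e.inv ≫ g, δ, ?_, hA, hB⟩
  exact isomorphic_distinguished _ hT _
    (Triangle.isoMk _ _ (Iso.refl A) e.symm (Iso.refl B)
      (show (f ≫ e.hom) ≫ e.inv = 𝟙 A ≫ f by simp)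
      (show (e.inv ≫ g) ≫ 𝟙 B = e.inv ≫ g by simp)
      (show δ ≫ (𝟙 A)⟦(1 : ℤ)⟧' = 𝟙 B ≫ δ by simp))

lemma shift (h : WithoutWeights w α β M) (k : ℤ) :
    WithoutWeights w (α + k) (β + k) (M⟦k⟧) := by
  obtain ⟨A, B, f, g, δ, hT, hA, hB⟩ := h
  exact ⟨_, _, _, _, _, Triangle.shift_distinguished _ hT k,
    (w.shift_mem_leN_iff (by lia)).2 hA, (w.shift_mem_geN_iff (by lia)).2 hB⟩

lemma of_shift (k : ℤ) (h : WithoutWeights w (α + k) (β + k) (M⟦k⟧)) : WithoutWeights w α β M := by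
  simpa using (h.shift (-k)).of_iso ((shiftFunctorCompIsoId C k (-k) (by lia)).app M)

end WithoutWeights

namespace WeightStructure

variable {C} (w : WeightStructure C)

/-- A weight decomposition is a weight filtration avoiding the empty range of weights
`n + 1, …, n`. -/
lemma withoutWeights_add_one_self (n : ℤ) (M : C) : WithoutWeights w (n + 1) n M := by
  obtain ⟨A, B, f, g, δ, hT, hA, hB⟩ := w.exists_decomp (M⟦-n⟧)
  refine WithoutWeights.of_shift (-n) ⟨A, B, f, g, δ, hT, ?_, ?_⟩
  · simpa using w.mem_leN_zero_iff.2 hA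
  · simpa using! hB

lemma exists_distTriang_leN_geN (n : ℤ) (M : C) :
    ∃ (A B : C) (f : A ⟶ M) (g : M ⟶ B) (δ : B ⟶ A⟦(1 : ℤ)⟧),
      Triangle.mk f g δ ∈ distTriang C ∧ A ∈ w.leN n ∧ B ∈ w.geN (n + 1) := by
  simpa [WithoutWeights] using w.withoutWeights_add_one_self n M

variable {n : ℤ} {A M B X Y : C} {f : A ⟶ M} {g : M ⟶ B} {δ : B ⟶ A⟦(1 : ℤ)⟧}

lemma mem_geN_of_mor₁_eq_zero (hT : Triangle.mk f g δ ∈ distTriang C) (hf : f = 0)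
    (hB : B ∈ w.geN n) : M ∈ w.geN n := by
  obtain ⟨ρ, hρ⟩ : ∃ ρ : B ⟶ M, 𝟙 M = g ≫ ρ :=
    Triangle.yoneda_exact₂ _ hT (𝟙 M) ((Category.comp_id f).trans hf)
  exact w.geN_of_retract ⟨g, ρ, hρ.symm⟩ hB

lemma mem_leN_of_mor₂_eq_zero (hT : Triangle.mk f g δ ∈ distTriang C) (hg : g = 0)
    (hA : A ∈ w.leN n) : M ∈ w.leN n := by
  obtain ⟨ρ, hρ⟩ : ∃ ρ : M ⟶ A, 𝟙 M = ρ ≫ f :=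
    Triangle.coyoneda_exact₂ _ hT (𝟙 M) ((Category.id_comp g).trans hg)
  exact w.leN_of_retract ⟨ρ, f, hρ.symm⟩ hA

lemma mem_geN_of_forall_eq_zero (h : ∀ W ∈ w.leN (n - 1), ∀ s : W ⟶ X, s = 0) :
    X ∈ w.geN n := by
  obtain ⟨A, B, f, g, δ, hT, hA, hB⟩ := w.exists_distTriang_leN_geN (n - 1) X
  rw [sub_add_cancel] at hB
  exact w.mem_geN_of_mor₁_eq_zero hT (h A hA f) hB

lemma mem_leN_of_forall_eq_zero (h : ∀ W ∈ w.geN (n + 1), ∀ s : X ⟶ W, s = 0) :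
    X ∈ w.leN n := by
  obtain ⟨A, B, f, g, δ, hT, hA, hB⟩ := w.exists_distTriang_leN_geN n X
  exact w.mem_leN_of_mor₂_eq_zero hT (h B hB g) hA

lemma mem_geN₁_of_distTriang (hT : Triangle.mk f g δ ∈ distTriang C)
    (hM : M ∈ w.geN n) (hB : B ∈ w.geN (n + 1)) : A ∈ w.geN n := by
  refine w.mem_geN_of_forall_eq_zero fun W hW s => ?_
  obtain ⟨t, ht⟩ := Triangle.coyoneda_exact₂ _ (inv_rot_of_distTriang _ hT) s
    (w.eq_zero_of_leN_of_geN (by lia) hW hM _)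
  have hB' : B⟦(-1 : ℤ)⟧ ∈ w.geN n := (w.shift_mem_geN_iff (by lia)).2 hB
  rw [ht, w.eq_zero_of_leN_of_geN (by lia) hW hB' t]
  exact zero_comp

lemma mem_leN₃_of_distTriang (hT : Triangle.mk f g δ ∈ distTriang C)
    (hA : A ∈ w.leN (n - 1)) (hM : M ∈ w.leN n) : B ∈ w.leN n := by
  refine w.mem_leN_of_forall_eq_zero fun W hW s => ?_
  obtain ⟨t, ht⟩ := Triangle.yoneda_exact₃ _ hT s (w.eq_zero_of_leN_of_geN (by lia) hM hW _)
  have hA' : A⟦(1 : ℤ)⟧ ∈ w.leN n := (w.shift_mem_leN_iff (by lia)).2 hA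
  rw [ht, w.eq_zero_of_leN_of_geN (by lia) hA' hW t]
  exact comp_zero

lemma exists_distTriang_heart_of_geN_zero (hX : X ∈ w.geN 0) :
    ∃ (P Q : C) (j : P ⟶ X) (q : X ⟶ Q) (η : Q ⟶ P⟦(1 : ℤ)⟧),
      Triangle.mk j q η ∈ distTriang C ∧ P ∈ w.heart ∧ Q ∈ w.geN 1 := by
  obtain ⟨P, Q, j, q, η, hT, hP, hQ⟩ := w.exists_distTriang_leN_geN 0 X
  exact ⟨P, Q, j, q, η, hT, ⟨hP, w.mem_geN₁_of_distTriang hT hX hQ⟩, hQ⟩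

lemma exists_distTriang_heart_of_leN_zero (hX : X ∈ w.leN 0) :
    ∃ (K N : C) (k : K ⟶ X) (l : X ⟶ N) (η : N ⟶ K⟦(1 : ℤ)⟧),
      Triangle.mk k l η ∈ distTriang C ∧ K ∈ w.leN (-1) ∧ N ∈ w.heart := by
  obtain ⟨K, N, k, l, η, hT, hK, hN⟩ := w.exists_distTriang_leN_geN (-1) X
  exact ⟨K, N, k, l, η, hT, hK, w.mem_leN₃_of_distTriang hT hK hX, hN⟩

lemma exists_retract_of_distTriang {a : X ⟶ M} {b : M ⟶ Y} {c : Y ⟶ X⟦(1 : ℤ)⟧}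
    (hT : Triangle.mk f g δ ∈ distTriang C) (hA : A ∈ w.leN n) (hB : B ∈ w.geN (n + 1))
    (hT' : Triangle.mk a b c ∈ distTriang C) (hX : X ∈ w.leN n) (hY : Y ∈ w.geN (n + 2)) :
    ∃ h : Retract Y B, g ≫ h.r = b ∧ b ≫ h.i = g := by
  obtain ⟨y, hy⟩ : ∃ y : B ⟶ Y, b = g ≫ y :=
    Triangle.yoneda_exact₂ _ hT b (w.eq_zero_of_leN_of_geN (by lia) hA hY _)
  obtain ⟨x, hx⟩ : ∃ x : Y ⟶ B, g = b ≫ x :=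
    Triangle.yoneda_exact₂ _ hT' g (w.eq_zero_of_leN_of_geN (by lia) hX hB _)
  have hbxy : b ≫ (x ≫ y - 𝟙 Y) = 0 := by
    rw [Preadditive.comp_sub, ← Category.assoc, ← hx, ← hy, Category.comp_id, sub_self]
  obtain ⟨t, ht⟩ : ∃ t : X⟦(1 : ℤ)⟧ ⟶ Y, x ≫ y - 𝟙 Y = c ≫ t :=
    Triangle.yoneda_exact₃ _ hT' _ hbxy
  have hX' : X⟦(1 : ℤ)⟧ ∈ w.leN (n + 1) := (w.shift_mem_leN_iff rfl).2 hX
  have hxy : x ≫ y = 𝟙 Y := by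
    rw [← sub_eq_zero, ht, w.eq_zero_of_leN_of_geN (by lia) hX' hY t, comp_zero]
  exact ⟨⟨x, y, hxy⟩, hy.symm, hx.symm⟩

end WeightStructure

section WeightExact

variable {C₁ : Type*} [Category C₁] [Preadditive C₁] [HasZeroObject C₁] [HasShift C₁ ℤ]
  [∀ n : ℤ, (CategoryTheory.shiftFunctor C₁ n).Additive] [Pretriangulated C₁]
  {C₂ : Type*} [Category C₂] [Preadditive C₂] [HasZeroObject C₂] [HasShift C₂ ℤ]
  [∀ n : ℤ, (CategoryTheory.shiftFunctor C₂ n).Additive] [Pretriangulated C₂]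
  {w₁ : WeightStructure C₁} {w₂ : WeightStructure C₂} {r : C₁ ⥤ C₂} [r.CommShift ℤ]

namespace WeightExact

lemma map_leN (hr : WeightExact w₁ w₂ r) {n : ℤ} {X : C₁} (hX : X ∈ w₁.leN n) :
    r.obj X ∈ w₂.leN n :=
  (w₂.le_iff_of_iso ((r.commShiftIso (-n)).app X)).1 (hr.1 _ hX)

lemma map_geN (hr : WeightExact w₁ w₂ r) {n : ℤ} {X : C₁} (hX : X ∈ w₁.geN n) :
    r.obj X ∈ w₂.geN n :=
  (w₂.ge_iff_of_iso ((r.commShiftIso (-n)).app X)).1 (hr.2 _ hX)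

variable [r.IsTriangulated]

lemma withoutWeights_map (hr : WeightExact w₁ w₂ r) {α β : ℤ} {M : C₁}
    (h : WithoutWeights w₁ α β M) : WithoutWeights w₂ α β (r.obj M) := by
  obtain ⟨A, B, f, g, δ, hT, hA, hB⟩ := h
  exact ⟨_, _, _, _, _, r.map_distinguished _ hT, hr.map_leN hA, hr.map_geN hB⟩

lemma exists_map_heart_factorization (hr : WeightExact w₁ w₂ r) (hfull : FullOn r w₁.heart)
    {X Y : C₁} (hX : X ∈ w₁.leN 0) (hY : Y ∈ w₁.geN 0) (t : r.obj X ⟶ r.obj Y) :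
    ∃ N ∈ w₁.heart, ∃ (l : X ⟶ N) (s : N ⟶ Y), r.map (l ≫ s) = t := by
  obtain ⟨K, N, k, l, _, hTX, hK, hN⟩ := w₁.exists_distTriang_heart_of_leN_zero hX
  obtain ⟨P, Q, j, q, _, hTY, hP, hQ⟩ := w₁.exists_distTriang_heart_of_geN_zero hY
  obtain ⟨t', ht'⟩ : ∃ t' : r.obj N ⟶ r.obj Y, t = r.map l ≫ t' :=
    Triangle.yoneda_exact₂ _ (r.map_distinguished _ hTX) t
      (w₂.eq_zero_of_leN_of_geN (by lia) (hr.map_leN hK) (hr.map_geN hY) _)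
  obtain ⟨t'', ht''⟩ : ∃ t'' : r.obj N ⟶ r.obj P, t' = t'' ≫ r.map j :=
    Triangle.coyoneda_exact₂ _ (r.map_distinguished _ hTY) t'
      (w₂.eq_zero_of_leN_of_geN (by lia) (hr.map_leN hN.1) (hr.map_geN hQ) _)
  obtain ⟨s, rfl⟩ := hfull N P hN hP t''
  exact ⟨N, hN, l, s ≫ j, by simp [ht', ht'']⟩

lemma mem_geN_one_of_map (hr : WeightExact w₁ w₂ r) (hfull : FullOn r w₁.heart)
    (hcons : ConservativeOn r w₁.heart) {B : C₁} (hB : B ∈ w₁.geN 0)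
    (hrB : r.obj B ∈ w₂.geN 1) : B ∈ w₁.geN 1 := by
  obtain ⟨P, Q, j, q, η, hT, hP, hQ⟩ := w₁.exists_distTriang_heart_of_geN_zero hB
  have hT' := inv_rot_of_distTriang _ hT
  let v : Q⟦(-1 : ℤ)⟧ ⟶ P := (Triangle.mk j q η).invRotate.mor₁
  have hvj : v ≫ j = 0 := comp_distTriang_mor_zero₁₂ _ hT'
  have hrj : r.map j = 0 := w₂.eq_zero_of_leN_of_geN (by lia) (hr.map_leN hP.1) hrB _
  obtain ⟨σ, hσ⟩ : ∃ σ : r.obj P ⟶ r.obj (Q⟦(-1 : ℤ)⟧), 𝟙 _ = σ ≫ r.map v :=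
    Triangle.coyoneda_exact₂ _ (r.map_distinguished _ hT') (𝟙 (r.obj P))
      ((Category.id_comp _).trans hrj)
  obtain ⟨N, -, l, s, rfl⟩ := hr.exists_map_heart_factorization hfull hP.1
    ((w₁.shift_mem_geN_iff (by lia)).2 hQ) σ
  have : IsIso ((l ≫ s) ≫ v) :=
    hcons P P hP hP _ (by rw [Functor.map_comp, ← hσ]; infer_instance)
  have hj : j = 0 := by
    rw [← cancel_epi ((l ≫ s) ≫ v), Category.assoc, hvj, comp_zero, comp_zero]
  exact w₁.mem_geN_of_mor₁_eq_zero hT hj hQ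

lemma mem_geN_of_map (hr : WeightExact w₁ w₂ r) (hfull : FullOn r w₁.heart)
    (hcons : ConservativeOn r w₁.heart) {n m : ℤ} {B : C₁} (hB : B ∈ w₁.geN n)
    (hrB : r.obj B ∈ w₂.geN m) : B ∈ w₁.geN m := by
  rcases le_total m n with hmn | hnm
  · exact w₁.antitone_geN hmn hB
  induction m, hnm using Int.leInduction with
  | base => exact hB
  | succ k _ ih =>
    have hBk : B ∈ w₁.geN k := ih (w₂.antitone_geN (by lia) hrB)
    refine (w₁.shift_mem_geN_iff (k := -k) (m := 1) (by lia)).1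
      (hr.mem_geN_one_of_map hfull hcons ((w₁.shift_mem_geN_iff (by lia)).2 hBk) ?_)
    exact w₂.geN_of_retract (.ofIso ((r.commShiftIso (-k)).app B))
      ((w₂.shift_mem_geN_iff (by lia)).2 hrB)

lemma withoutWeights_zero_of_map (hr : WeightExact w₁ w₂ r) (hnil : NilRadicalOn w₁.heart)
    (hsplit : PseudoAbelianOn w₁.heart) (hfull : FullOn r w₁.heart)
    (hcons : ConservativeOn r w₁.heart) {β : ℤ} (hβ : 0 ≤ β) {M : C₁}
    (h : WithoutWeights w₂ 0 β (r.obj M)) : WithoutWeights w₁ 0 β M := by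
  obtain ⟨X, Y, a, b, c, hTr, hX, hY⟩ := h
  obtain ⟨A, B, f, g, δ, hT, hA, hB⟩ := w₁.exists_distTriang_leN_geN (-1) M
  have hrT := r.map_distinguished _ hT
  obtain ⟨y, hgy, hby⟩ : ∃ y : Retract Y (r.obj B), r.map g ≫ y.r = b ∧ b ≫ y.i = r.map g :=
    w₂.exists_retract_of_distTriang hrT (hr.map_leN hA) (hr.map_geN hB) hTr hX
      (w₂.antitone_geN (by lia) hY)
  have hgy' : r.map g ≫ (𝟙 _ - y.r ≫ y.i) = 0 := by
    simp [Preadditive.comp_sub, reassoc_of% hgy, hby]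
  obtain ⟨t, ht⟩ : ∃ t : r.obj (A⟦(1 : ℤ)⟧) ⟶ r.obj B, 𝟙 _ - y.r ≫ y.i = r.map δ ≫ t := by
    obtain ⟨t, ht⟩ := Triangle.yoneda_exact₃ _ hrT _ hgy'
    exact ⟨_, ht.trans (Category.assoc _ _ _)⟩
  obtain ⟨N, hN, l, s, rfl⟩ := hr.exists_map_heart_factorization hfull
    ((w₁.shift_mem_leN_iff (by lia)).2 hA) hB t
  have he : r.map ((δ ≫ l) ≫ s) = 𝟙 _ - y.r ≫ y.i := by
    rw [ht, Category.assoc, Functor.map_comp]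
  obtain ⟨Z, z, ρ, hzρ, hz⟩ :=
    exists_retract_of_idempotent_map_comp hcons hnil hsplit hN (δ ≫ l) s
      (by rw [he]; simp [Preadditive.comp_sub, Preadditive.sub_comp])
  obtain ⟨B', u, hu⟩ := exists_complement_of_retract z
  have hru : r.map u.r ≫ r.map u.i = y.r ≫ y.i := by
    rw [← Functor.map_comp, hu, Functor.map_sub, hz, he, CategoryTheory.Functor.map_id,
      sub_sub_cancel]
  have hB' : B' ∈ w₁.geN (β + 1) := by
    refine hr.mem_geN_of_map hfull hcons (w₁.geN_of_retract u hB)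
      (w₂.geN_of_retract ⟨r.map u.i ≫ y.r, y.i ≫ r.map u.r, ?_⟩ hY)
    simp [← reassoc_of% hru, ← Functor.map_comp]
  have hgδ : g ≫ δ = 0 := comp_distTriang_mor_zero₂₃ _ hT
  obtain ⟨A', f', δ', hT', ⟨hA'⟩⟩ := exists_distTriang_of_retract hT u
    (by simp [hu, hzρ, Preadditive.comp_sub, reassoc_of% hgδ])
  exact ⟨A', B', f', g ≫ u.r, δ', hT', w₁.leN_of_retract hA' hA, hB'⟩

end WeightExact

theorem statement7_general [r.IsTriangulated] (hnil : NilRadicalOn w₁.heart)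
    (hsplit : PseudoAbelianOn w₁.heart) (hr : WeightExact w₁ w₂ r) (hfull : FullOn r w₁.heart)
    (hcons : ConservativeOn r w₁.heart) (M : C₁) {α β : ℤ} (hαβ : α ≤ β) :
    WithoutWeights w₁ α β M ↔ WithoutWeights w₂ α β (r.obj M) := by
  refine ⟨hr.withoutWeights_map, fun h => .of_shift (-α) ?_⟩
  have hs := (h.shift (-α)).of_iso ((r.commShiftIso (-α)).symm.app M)
  rw [add_neg_cancel] at hs ⊢
  exact hr.withoutWeights_zero_of_map hnil hsplit hfull hcons (by lia) hs

end WeightExact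

theorem statement7
    (F : Type*) [Field F] [CharZero F]
    {C₁ : Type*} [Category C₁] [Preadditive C₁] [HasZeroObject C₁] [HasShift C₁ ℤ]
    [∀ n : ℤ, (CategoryTheory.shiftFunctor C₁ n).Additive] [Pretriangulated C₁] [CategoryTheory.Linear F C₁]
    {C₂ : Type*} [Category C₂] [Preadditive C₂] [HasZeroObject C₂] [HasShift C₂ ℤ]
    [∀ n : ℤ, (CategoryTheory.shiftFunctor C₂ n).Additive] [Pretriangulated C₂] [CategoryTheory.Linear F C₂]
    (w₁ : WeightStructure C₁) (w₂ : WeightStructure C₂)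
    (r : C₁ ⥤ C₂) [r.Additive] [Functor.Linear F r] [r.CommShift ℤ] [r.IsTriangulated]
    (hbounded : w₁.Bounded)
    (hsemiprimary : SemiprimaryOn w₁.heart) (hpseudoabelian : PseudoAbelianOn w₁.heart)
    (hwe : WeightExact w₁ w₂ r)
    (hfull : ∀ X Y : C₁, X ∈ w₁.heart → Y ∈ w₁.heart →
      ∀ g : r.obj X ⟶ r.obj Y, ∃ f : X ⟶ Y, r.map f = g)
    (hcons : ∀ X Y : C₁, X ∈ w₁.heart → Y ∈ w₁.heart →
      ∀ f : X ⟶ Y, IsIso (r.map f) → IsIso f)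
    (M : C₁) (α β : ℤ) (hαβ : α ≤ β) :
    WithoutWeights w₁ α β M ↔ WithoutWeights w₂ α β (r.obj M) := by
  exact statement7_general hsemiprimary.nilRadicalOn hpseudoabelian hwe hfull hcons M hαβ

end Paper
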